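/- arXiv:2511.06690 — 5 statements merged into one kernel-verified Lean document; each statement's English description precedes it below -/
import Mathlib

section
/- Fix 2 < p < ∞. The natural embedding E : ℓ² → ℓ^p, which maps each square-summable real sequence to itself regarded as an element of ℓ^p, is a well-defined injective bounded linear operator that is strictly singular and not compact. -/
open scoped ENNReal

/-- A bounded linear operator is strictly singular if its restriction to any
infinite-dimensional closed subspace of the domain is not bounded below. -/
def StrictlySingular {X Y : Type*} [NormedAddCommGroup X] [NormedSpace ℝ X]
    [NormedAddCommGroup Y] [NormedSpace ℝ Y] (A : X →L[ℝ] Y) : Prop :=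
  ∀ Z : Submodule ℝ X, IsClosed (Z : Set X) → ¬ FiniteDimensional ℝ Z →
    ¬ ∃ c : ℝ, 0 < c ∧ ∀ z ∈ Z, c * ‖z‖ ≤ ‖A z‖

theorem aux_norm (p : ℝ≥0∞) (hp1 : 2 < p) (hp2 : p < ∞)
    (x : lp (fun _ : ℕ => ℝ) 2) (y : lp (fun _ : ℕ => ℝ) p) (h : ∀ k, y k = x k)
    (M : ℝ) (hM : ∀ k, |x k| ≤ M) :
    ‖y‖ ^ p.toReal ≤ M ^ (p.toReal - 2) * ‖x‖ ^ 2 := by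
  have hp : 2 < p.toReal := by
    have := (ENNReal.toReal_lt_toReal (by simp) hp2.ne).2 hp1
    simpa using this
  have hy := lp.hasSum_norm (by linarith) y
  have hx := lp.hasSum_norm (p := 2) (by simp) x
  have hx2 := hx.mul_left (M ^ (p.toReal - 2))
  have := hasSum_le (fun k => ?_) hy hx2
  · simpa using this
  · rw [h k]
    have h0 : 0 ≤ |x k| := abs_nonneg _
    have e : ‖x k‖ ^ p.toReal = |x k| ^ (p.toReal - 2) * |x k| ^ (2:ℝ) := by
      rw [← Real.rpow_add_of_nonneg h0 (by linarith) (by norm_num)]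
      simp
    rw [e]
    simp only [ENNReal.toReal_ofNat, Real.norm_eq_abs]
    gcongr
    exact hM k

theorem aux_exists (Z : Submodule ℝ (lp (fun _ : ℕ => ℝ) 2)) (hZ : ¬ FiniteDimensional ℝ Z)
    (z : lp (fun _ : ℕ => ℝ) 2) (N : ℕ) :
    ∃ w ∈ Z, ‖w‖ = 1 ∧ inner ℝ z w = 0 ∧ ∀ k < N, w k = 0 := by
  let L : Z →ₗ[ℝ] (Fin N → ℝ) × ℝ :=
    (LinearMap.prod (LinearMap.pi fun i : Fin N =>
      (lp.evalₗ (𝕜 := ℝ) (E := fun _ : ℕ => ℝ) (p := 2) (i : ℕ)))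
      ((innerSL ℝ z : lp (fun _ : ℕ => ℝ) 2 →L[ℝ] ℝ) : lp (fun _ : ℕ => ℝ) 2 →ₗ[ℝ] ℝ)) ∘ₗ Z.subtype
  have hL : ¬ Function.Injective L := fun hi => hZ (FiniteDimensional.of_injective L hi)
  have : ∃ v : Z, L v = 0 ∧ v ≠ 0 := by
    by_contra! hcon
    exact hL ((injective_iff_map_eq_zero L).2 hcon)
  obtain ⟨v, hv, hv0⟩ := this
  have h1 : ∀ k < N, (v : lp (fun _ : ℕ => ℝ) 2) k = 0 := fun k hk =>
    congrFun (congrArg Prod.fst hv) ⟨k, hk⟩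
  have h2 : inner ℝ z (v : lp (fun _ : ℕ => ℝ) 2) = 0 := congrArg Prod.snd hv
  have hn : ‖(v : lp (fun _ : ℕ => ℝ) 2)‖ ≠ 0 := by
    rw [norm_ne_zero_iff]; simpa using hv0
  refine ⟨(‖(v : lp (fun _ : ℕ => ℝ) 2)‖)⁻¹ • (v : lp (fun _ : ℕ => ℝ) 2), Z.smul_mem _ v.2, ?_, ?_, ?_⟩
  · rw [norm_smul, norm_inv, norm_norm, inv_mul_cancel₀ hn]
  · rw [inner_smul_right, h2, mul_zero]
  · intro k hk
    rw [lp.coeFn_smul, Pi.smul_apply, h1 k hk, smul_zero]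

theorem aux_seq (Z : Submodule ℝ (lp (fun _ : ℕ => ℝ) 2)) (hZ : ¬ FiniteDimensional ℝ Z)
    (n : ℕ) : ∃ z ∈ Z, ‖z‖ ^ 2 = n ∧ ∀ k, |z k| ≤ 2 := by
  induction n with
  | zero => exact ⟨0, Z.zero_mem, by simp, by simp⟩
  | succ n ih =>
    obtain ⟨z, hz, hzn, hzk⟩ := ih
    have hs := (lp.hasSum_norm (p := 2) (by simp) z).summable.tendsto_atTop_zero
    obtain ⟨N, hN⟩ := Filter.eventually_atTop.1 (hs.eventually (gt_mem_nhds one_pos))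
    obtain ⟨w, hw, hwn, hwi, hwk⟩ := aux_exists Z hZ z N
    refine ⟨z + w, Z.add_mem hz hw, ?_, fun k => ?_⟩
    · rw [norm_add_sq_real, hzn, hwi, hwn]; push_cast; ring
    · rw [lp.coeFn_add, Pi.add_apply]
      rcases lt_or_ge k N with hk | hk
      · rw [hwk k hk, add_zero]; exact hzk k
      · have h1 : |z k| ≤ 1 := by
          have := hN k hk
          simp at this
          exact this.le
        have h2 : |w k| ≤ 1 := hwn ▸ lp.norm_apply_le_norm (by simp) w k
        exact (abs_add_le _ _).trans (by linarith)

/-- For `2 < p < ∞`, the natural embedding `E : ℓ² → ℓ^p` (identity on sequences)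
is a well-defined injective bounded linear operator which is strictly singular and not compact. -/
theorem embedding_l2_lp_strictlySingular_not_compact
    (p : ℝ≥0∞) [Fact (1 ≤ p)] (hp1 : 2 < p) (hp2 : p < ∞) :
    ∃ E : lp (fun _ : ℕ => ℝ) 2 →L[ℝ] lp (fun _ : ℕ => ℝ) p,
      (∀ (x : lp (fun _ : ℕ => ℝ) 2) (k : ℕ), E x k = x k) ∧
      Function.Injective E ∧
      StrictlySingular E ∧
      ¬ IsCompact (closure (E '' Metric.closedBall 0 1)) := by
  have hp : 2 < p.toReal := by
    have := (ENNReal.toReal_lt_toReal (by simp) hp2.ne).2 hp1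
    simpa using this
  let L := lp.linearMapOfLE (𝕜 := ℝ) (E := fun _ : ℕ => ℝ) hp1.le
  have hL : ∀ (x : lp (fun _ : ℕ => ℝ) 2) (k : ℕ), L x k = x k := fun x k => rfl
  have hbd : ∀ x, ‖L x‖ ≤ 1 * ‖x‖ := fun x => by
    have := aux_norm p hp1 hp2 x (L x) (hL x) ‖x‖ (fun k => lp.norm_apply_le_norm (by simp) x k)
    rw [← Real.rpow_natCast, ← Real.rpow_add_of_nonneg (norm_nonneg _) (by linarith) (by norm_num)] at this
    rw [one_mul]
    refine (Real.rpow_le_rpow_iff (norm_nonneg _) (norm_nonneg _) (by linarith : 0 < p.toReal)).1 ?_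
    simpa using this
  let E := L.mkContinuous 1 hbd
  have hE : ∀ (x : lp (fun _ : ℕ => ℝ) 2) (k : ℕ), E x k = x k := fun x k => rfl
  refine ⟨E, hE, ?_, ?_, ?_⟩
  · intro x y hxy
    apply lp.ext
    funext k
    rw [← hE x, ← hE y, hxy]
  · rintro Z - hZ ⟨c, hc, hcZ⟩
    have key : ∀ n : ℕ, c ^ p.toReal * (n : ℝ) ^ (p.toReal / 2 - 1) ≤ 2 ^ (p.toReal - 2) := by
      intro n
      rcases Nat.eq_zero_or_pos n with rfl | hn
      · rw [Nat.cast_zero, Real.zero_rpow (by linarith), mul_zero]; positivity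
      have hn' : (0 : ℝ) < n := by exact_mod_cast hn
      obtain ⟨z, hz, hzn, hzk⟩ := aux_seq Z hZ n
      have h1 := aux_norm p hp1 hp2 z (E z) (hE z) 2 hzk
      have h2 := Real.rpow_le_rpow (by positivity) (hcZ z hz) (by linarith : 0 ≤ p.toReal)
      rw [Real.mul_rpow hc.le (norm_nonneg _)] at h2
      have h3 : ‖z‖ ^ p.toReal = (n : ℝ) ^ (p.toReal / 2 - 1) * n := by
        rw [← Real.rpow_add_one hn'.ne', ← hzn, ← Real.rpow_natCast, ← Real.rpow_mul (norm_nonneg _)]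
        congr 1
        push_cast
        ring
      rw [h3] at h2
      rw [hzn] at h1
      have := h2.trans h1
      rw [← mul_assoc] at this
      exact le_of_mul_le_mul_right this hn'
    have ht : Filter.Tendsto (fun n : ℕ => c ^ p.toReal * (n : ℝ) ^ (p.toReal / 2 - 1))
        Filter.atTop Filter.atTop :=
      ((tendsto_rpow_atTop (by linarith)).comp tendsto_natCast_atTop_atTop).const_mul_atTop
        (by positivity)
    obtain ⟨n, hn⟩ := (ht.eventually_gt_atTop (2 ^ (p.toReal - 2))).exists
    exact absurd (key n) (not_le.2 hn)
  · intro hK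
    let e : ℕ → lp (fun _ : ℕ => ℝ) 2 := fun n => lp.single 2 n (1 : ℝ)
    have he : ∀ n, E (e n) ∈ closure (E '' Metric.closedBall 0 1) := fun n =>
      subset_closure ⟨e n, by simp [e, lp.norm_single], rfl⟩
    obtain ⟨a, -, φ, hφ, hl⟩ := hK.tendsto_subseq he
    obtain ⟨N, hN⟩ := Metric.cauchySeq_iff'.1 hl.cauchySeq 1 one_pos
    have h1 := hN (N + 1) (by omega)
    rw [dist_eq_norm] at h1
    have hne : φ N ≠ φ (N + 1) := (hφ (Nat.lt_succ_self N)).ne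
    have h2 := lp.norm_apply_le_norm (p := p) (by rintro rfl; simp at hp1)
      (E (e (φ (N + 1))) - E (e (φ N))) (φ N)
    rw [lp.coeFn_sub, Pi.sub_apply, hE, hE] at h2
    have e1 : e (φ N) (φ N) = 1 := lp.single_apply_self 2 _ _
    have e2 : e (φ (N + 1)) (φ N) = 0 := lp.single_apply_ne 2 _ _ hne
    rw [e1, e2] at h2
    simp only [Function.comp] at h1
    norm_num at h2
    linarith
end

section
/- Let X be an infinite-dimensional real Banach space and let C : X → X be a bounded linear operator that is strictly singular and whose range R(C) is not closed. On the product Banach space X × X define D₁(u, v) = (C u, v) and D₂(u, v) = (u, C v). Then: (i) D₁ and D₂ are not strictly singular, their ranges R(D₁) = R(C) × X and R(D₂) = X × R(C) are not closed, and these ranges contain the infinite-dimensional closed subspaces {0} × X and X × {0} respectively; (ii) the composition D₂ ∘ D₁, given by (u, v) ↦ (C u, C v), is strictly singular and has non-closed range R(C) × R(C). -/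
theorem css_comp {E F G : Type*} [NormedAddCommGroup E] [NormedSpace ℝ E] [CompleteSpace E]
    [NormedAddCommGroup F] [NormedSpace ℝ F] [NormedAddCommGroup G] [NormedSpace ℝ G]
    (C : F →L[ℝ] G) (hC : StrictlySingular C) (T : E →L[ℝ] F) :
    StrictlySingular (C.comp T) := by
  intro W hW hWi ⟨c, hc, h⟩
  have hlow : ∀ w ∈ W, c * ‖w‖ ≤ (‖C‖ + 1) * ‖T w‖ := by
    intro w hw
    have h1 := h w hw
    have h2 := C.le_opNorm (T w)
    have h3 := norm_nonneg (T w)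
    simp only [ContinuousLinearMap.comp_apply] at h1
    linarith
  have hCp : 0 < ‖C‖ + 1 := by positivity
  have hTp : 0 < ‖T‖ + 1 := by positivity
  have : CompleteSpace W := hW.completeSpace_coe
  let S : W →L[ℝ] F := T.comp W.subtypeL
  have hanti : AntilipschitzWith (Real.toNNReal ((‖C‖ + 1) / c)) S := by
    apply ContinuousLinearMap.antilipschitz_of_bound
    intro w
    rw [Real.coe_toNNReal _ (by positivity), div_mul_eq_mul_div, le_div_iff₀ hc]
    have := hlow w w.2
    rw [mul_comm]
    exact this
  have hr : (W.map (T : E →ₗ[ℝ] F) : Set F) = Set.range S := by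
    ext y
    simp [S]
  refine hC (W.map (T : E →ₗ[ℝ] F)) ?_ ?_ ⟨c / (‖T‖ + 1), by positivity, ?_⟩
  · rw [hr]
    exact hanti.isClosed_range S.uniformContinuous
  · intro hf
    apply hWi
    let S' : W →ₗ[ℝ] W.map (T : E →ₗ[ℝ] F) :=
      (S : W →ₗ[ℝ] F).codRestrict _ (fun w => ⟨w, w.2, rfl⟩)
    exact FiniteDimensional.of_injective S' (fun a b hab => hanti.injective (congrArg Subtype.val hab))
  · rintro _ ⟨w, hw, rfl⟩
    have h1 := h w hw
    have h2 := T.le_opNorm w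
    have h3 := norm_nonneg w
    rw [div_mul_eq_mul_div, div_le_iff₀ hTp]
    simp only [ContinuousLinearMap.comp_apply, ContinuousLinearMap.coe_coe] at h1 ⊢
    have h4 : ‖T w‖ ≤ (‖T‖ + 1) * ‖w‖ := by linarith
    nlinarith

theorem inf_ker_not_fd {E : Type*} [NormedAddCommGroup E] [NormedSpace ℝ E]
    (Z : Submodule ℝ E) (hZ : ¬ FiniteDimensional ℝ Z) {ι : Type*} [Finite ι]
    (f : ι → E →L[ℝ] ℝ) :
    ¬ FiniteDimensional ℝ
      (Z ⊓ LinearMap.ker (LinearMap.pi (fun i => (f i : E →ₗ[ℝ] ℝ))) : Submodule ℝ E) := by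
  intro h
  apply hZ
  rw [FiniteDimensional, Module.Finite.iff_fg] at h ⊢
  exact Submodule.fg_of_fg_map_of_fg_inf_ker _ (IsNoetherian.noetherian _) h

theorem small_subspace {E F : Type*} [NormedAddCommGroup E] [NormedSpace ℝ E]
    [NormedAddCommGroup F] [NormedSpace ℝ F]
    (A : E →L[ℝ] F) (hA : StrictlySingular A) (Z : Submodule ℝ E)
    (hZc : IsClosed (Z : Set E)) (hZ : ¬ FiniteDimensional ℝ Z) (ε : ℝ) (hε : 0 < ε) :
    ∃ W : Submodule ℝ E, IsClosed (W : Set E) ∧ ¬ FiniteDimensional ℝ W ∧ W ≤ Z ∧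
      ∀ w ∈ W, ‖A w‖ ≤ ε * ‖w‖ := by
  obtain ⟨g, hP, hr⟩ := exists_seq_of_forall_finset_exists
    (α := ℕ × E × (E →L[ℝ] ℝ))
    (fun x => x.2.1 ∈ Z ∧ ‖x.2.2‖ ≤ 1 ∧ x.2.2 x.2.1 = 1 ∧ ‖A x.2.1‖ ≤ ε / 2 * (1/4) ^ x.1 ∧
      ‖x.2.1‖ ≤ 1)
    (fun x y => x.1 < y.1 ∧ x.2.2 y.2.1 = 0) (by
      intro s _
      obtain ⟨n, hn⟩ : ∃ n : ℕ, ∀ x ∈ s, x.1 < n :=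
        ⟨s.sup (fun x => x.1) + 1, fun x hx => Nat.lt_succ_of_le (Finset.le_sup (f := fun x => x.1) hx)⟩
      let K := LinearMap.ker (LinearMap.pi (fun i : s => (i.1.2.2 : E →ₗ[ℝ] ℝ)))
      have hK := inf_ker_not_fd Z hZ (fun i : s => i.1.2.2)
      have hKc : IsClosed ((Z ⊓ K : Submodule ℝ E) : Set E) := by
        have : ((Z ⊓ K : Submodule ℝ E) : Set E) = (Z : Set E) ∩ ⋂ i : s, {x | i.1.2.2 x = 0} := by
          ext x
          simp [K, funext_iff]
        rw [this]
        exact hZc.inter (isClosed_iInter fun i => isClosed_eq i.1.2.2.continuous continuous_const)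
      have hnb := hA _ hKc hK
      push Not at hnb
      obtain ⟨z, hz, hzA⟩ := hnb (ε / 2 * (1/4) ^ n) (by positivity)
      have hz0 : ‖z‖ ≠ 0 := by
        intro h0
        rw [norm_eq_zero] at h0
        simp [h0] at hzA
      have hzp : 0 < ‖z‖ := lt_of_le_of_ne (norm_nonneg _) (Ne.symm hz0)
      obtain ⟨f, hf, hfz⟩ := exists_dual_vector ℝ z hz0
      refine ⟨(n, ‖z‖⁻¹ • z, f), ⟨Z.smul_mem _ hz.1, hf.le, ?_, ?_, ?_⟩, ?_⟩
      · simp only [map_smul, hfz]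
        simp [hz0]
      · simp only [map_smul, norm_smul, norm_inv, norm_norm]
        rw [inv_mul_le_iff₀ hzp, mul_comm]
        exact hzA.le
      · simp [norm_smul, hz0]
      · intro x hx
        refine ⟨hn x hx, ?_⟩
        have : x.2.2 z = 0 := congrFun hz.2 ⟨x, hx⟩
        simp [this])
  let z : ℕ → E := fun k => (g k).2.1
  let f : ℕ → E →L[ℝ] ℝ := fun k => (g k).2.2
  have hmono : StrictMono (fun k => (g k).1) := fun a b hab => (hr a b hab).1
  have hAz : ∀ k, ‖A (z k)‖ ≤ ε / 2 * (1/4) ^ k := fun k =>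
    (hP k).2.2.2.1.trans (mul_le_mul_of_nonneg_left
      (pow_le_pow_of_le_one (by norm_num) (by norm_num) (hmono.le_apply (x := k))) (by positivity))
  have hfb : ∀ k x, |f k x| ≤ ‖x‖ := fun k x => by
    have h1 := (f k).le_opNorm x
    have h2 : ‖f k‖ ≤ 1 := (hP k).2.1
    rw [Real.norm_eq_abs] at h1
    nlinarith [norm_nonneg x]
  have hf1 : ∀ k, f k (z k) = 1 := fun k => (hP k).2.2.1
  have hf0 : ∀ i j, i < j → f i (z j) = 0 := fun i j hij => (hr i j hij).2
  have hz1 : ∀ j k, |f k (z j)| ≤ 1 := fun j k => (hfb k _).trans (hP j).2.2.2.2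
  have hcoef : ∀ (N : ℕ) (a : ℕ → ℝ), ∀ k < N,
      |a k| ≤ 2 ^ k * ‖∑ j ∈ Finset.range N, a j • z j‖ := by
    intro N a k
    induction k using Nat.strong_induction_on with
    | _ k ih =>
    intro hk
    set w := ∑ j ∈ Finset.range N, a j • z j with hw
    have h1 : f k w = ∑ j ∈ Finset.range k, a j * f k (z j) + a k := by
      rw [hw, map_sum]
      simp only [map_smul, smul_eq_mul]
      have hs := Finset.sum_subset (f := fun j => a j * f k (z j))
        (Finset.range_subset_range.2 (Nat.succ_le_of_lt hk)) (by
          intro j _ hj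
          rw [Finset.mem_range, not_lt] at hj
          rw [hf0 k j hj, mul_zero])
      rw [← hs, Finset.sum_range_succ, hf1, mul_one]
    have h2 : |∑ j ∈ Finset.range k, a j * f k (z j)| ≤ ∑ j ∈ Finset.range k, 2 ^ j * ‖w‖ := by
      refine (Finset.abs_sum_le_sum_abs _ _).trans (Finset.sum_le_sum fun j hj => ?_)
      rw [Finset.mem_range] at hj
      have := ih j hj (hj.trans hk)
      rw [abs_mul]
      nlinarith [hz1 j k, abs_nonneg (a j)]
    have h3 : ∑ j ∈ Finset.range k, (2:ℝ) ^ j * ‖w‖ = (2 ^ k - 1) * ‖w‖ := by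
      rw [← Finset.sum_mul, geom_sum_eq (by norm_num)]
      norm_num
    have h4 : |a k| ≤ |f k w| + |∑ j ∈ Finset.range k, a j * f k (z j)| := by
      have : a k = f k w - ∑ j ∈ Finset.range k, a j * f k (z j) := by rw [h1]; ring
      rw [this]
      exact abs_sub _ _
    have := hfb k w
    linarith
  have hli : LinearIndependent ℝ z := by
    rw [linearIndependent_iff']
    intro s a hs i hi
    obtain ⟨N, hN⟩ := s.exists_nat_subset_range
    have := hcoef N (fun j => if j ∈ s then a j else 0) i (Finset.mem_range.1 (hN hi))
    have he : ∑ j ∈ Finset.range N, (if j ∈ s then a j else 0) • z j = 0 := by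
      rw [← hs]
      simp only [ite_smul, zero_smul]
      rw [← Finset.sum_filter, Finset.filter_mem_eq_inter, Finset.inter_eq_right.2 hN]
    rw [he] at this
    simpa [hi] using this
  have hbd : ∀ w ∈ Submodule.span ℝ (Set.range z), ‖A w‖ ≤ ε * ‖w‖ := by
    intro w hw
    obtain ⟨a, rfl⟩ := Finsupp.mem_span_range_iff_exists_finsupp.1 hw
    obtain ⟨N, hN⟩ := a.support.exists_nat_subset_range
    rw [Finsupp.sum_of_support_subset a hN _ (by simp)]
    set w := ∑ j ∈ Finset.range N, a j • z j with hw
    have h1 : ‖A w‖ ≤ ∑ j ∈ Finset.range N, ε / 2 * ‖w‖ * (1/2) ^ j := by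
      rw [hw, map_sum]
      refine (norm_sum_le _ _).trans (Finset.sum_le_sum fun j hj => ?_)
      rw [← hw, map_smul, norm_smul, Real.norm_eq_abs]
      have h2 := hcoef N a j (Finset.mem_range.1 hj)
      calc |a j| * ‖A (z j)‖ ≤ (2 ^ j * ‖w‖) * (ε / 2 * (1/4) ^ j) :=
            mul_le_mul h2 (hAz j) (norm_nonneg _) (by positivity)
        _ = ε / 2 * ‖w‖ * (2 * (1/4)) ^ j := by rw [mul_pow]; ring
        _ = _ := by norm_num
    rw [← Finset.mul_sum] at h1
    have h3 : ∑ j ∈ Finset.range N, (1/2 : ℝ) ^ j ≤ 2 := sum_geometric_two_le N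
    have h4 : 0 ≤ ε / 2 * ‖w‖ := by positivity
    nlinarith
  refine ⟨(Submodule.span ℝ (Set.range z)).topologicalClosure,
    Submodule.isClosed_topologicalClosure _, ?_, ?_, ?_⟩
  · intro hfd
    have hfd2 : FiniteDimensional ℝ (Submodule.span ℝ (Set.range z)) :=
      Submodule.finiteDimensional_of_le (Submodule.le_topologicalClosure _)
    have := (linearIndependent_span hli).finite_of_isNoetherian
    exact not_finite ℕ
  · apply Submodule.topologicalClosure_minimal _ _ hZc
    rw [Submodule.span_le]
    rintro _ ⟨k, rfl⟩
    exact (hP k).1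
  · intro w hw
    have hcl : IsClosed {w : E | ‖A w‖ ≤ ε * ‖w‖} :=
      isClosed_le (by fun_prop) (by fun_prop)
    exact closure_minimal (fun x hx => hbd x hx) hcl hw

/-- For a strictly singular operator `C : X → X` with non-closed range on an
infinite-dimensional real Banach space `X`, the operators `D₁(u,v) = (Cu, v)` and
`D₂(u,v) = (u, Cv)` on `X × X` are not strictly singular, have non-closed ranges
`R(C) × X` resp. `X × R(C)` containing the infinite-dimensional closed subspaces `{0} × X`
resp. `X × {0}`, while the composition `D₂ ∘ D₁ = (u,v) ↦ (Cu, Cv)` is strictly singular with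
non-closed range `R(C) × R(C)`. -/
theorem composition_crosses_type_divide
    {X : Type*} [NormedAddCommGroup X] [NormedSpace ℝ X] [CompleteSpace X]
    (hX : ¬ FiniteDimensional ℝ X)
    (C : X →L[ℝ] X) (hss : StrictlySingular C) (hncl : ¬ IsClosed (Set.range C))
    (D₁ D₂ : X × X →L[ℝ] X × X)
    (hD₁ : ∀ u v : X, D₁ (u, v) = (C u, v)) (hD₂ : ∀ u v : X, D₂ (u, v) = (u, C v)) :
    (¬ StrictlySingular D₁ ∧ ¬ StrictlySingular D₂) ∧
    (Set.range D₁ = Set.range C ×ˢ (Set.univ : Set X) ∧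
      Set.range D₂ = (Set.univ : Set X) ×ˢ Set.range C ∧
      ¬ IsClosed (Set.range D₁) ∧ ¬ IsClosed (Set.range D₂)) ∧
    (let M₁ : Submodule ℝ (X × X) := (⊥ : Submodule ℝ X).prod (⊤ : Submodule ℝ X)
     let M₂ : Submodule ℝ (X × X) := (⊤ : Submodule ℝ X).prod (⊥ : Submodule ℝ X)
     (IsClosed (M₁ : Set (X × X)) ∧ ¬ FiniteDimensional ℝ M₁ ∧
        (M₁ : Set (X × X)) ⊆ Set.range D₁) ∧
     (IsClosed (M₂ : Set (X × X)) ∧ ¬ FiniteDimensional ℝ M₂ ∧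
        (M₂ : Set (X × X)) ⊆ Set.range D₂)) ∧
    (StrictlySingular (D₂.comp D₁) ∧
      Set.range (D₂.comp D₁) = Set.range C ×ˢ Set.range C ∧
      ¬ IsClosed (Set.range (D₂.comp D₁))) := by
  have hr1 : Set.range D₁ = Set.range C ×ˢ (Set.univ : Set X) := by
    ext ⟨a, b⟩
    simp [hD₁]
  have hr2 : Set.range D₂ = (Set.univ : Set X) ×ˢ Set.range C := by
    ext ⟨a, b⟩
    simp [hD₂]
  have hr3 : Set.range (D₂.comp D₁) = Set.range C ×ˢ Set.range C := by
    ext ⟨a, b⟩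
    simp [hD₂, hD₁]
  have h0 : (0 : X) ∈ Set.range C := ⟨0, map_zero C⟩
  have hc1 : IsClosed (((⊥ : Submodule ℝ X).prod (⊤ : Submodule ℝ X) : Submodule ℝ (X × X)) :
      Set (X × X)) := by
    rw [Submodule.prod_coe]
    exact IsClosed.prod (by simp) (by simp)
  have hc2 : IsClosed (((⊤ : Submodule ℝ X).prod (⊥ : Submodule ℝ X) : Submodule ℝ (X × X)) :
      Set (X × X)) := by
    rw [Submodule.prod_coe]
    exact IsClosed.prod (by simp) (by simp)
  have hi1 : ¬ FiniteDimensional ℝ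
      ((⊥ : Submodule ℝ X).prod (⊤ : Submodule ℝ X) : Submodule ℝ (X × X)) := by
    intro h
    apply hX
    refine FiniteDimensional.of_injective ((LinearMap.inr ℝ X X).codRestrict
      ((⊥ : Submodule ℝ X).prod (⊤ : Submodule ℝ X)) (fun x => by simp)) ?_
    intro a b hab
    exact congrArg (fun p => p.1.2) hab
  have hi2 : ¬ FiniteDimensional ℝ
      ((⊤ : Submodule ℝ X).prod (⊥ : Submodule ℝ X) : Submodule ℝ (X × X)) := by
    intro h
    apply hX
    refine FiniteDimensional.of_injective ((LinearMap.inl ℝ X X).codRestrict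
      ((⊤ : Submodule ℝ X).prod (⊥ : Submodule ℝ X)) (fun x => by simp)) ?_
    intro a b hab
    exact congrArg (fun p => p.1.1) hab
  refine ⟨⟨?_, ?_⟩, ⟨hr1, hr2, ?_, ?_⟩, ⟨⟨hc1, hi1, ?_⟩, ⟨hc2, hi2, ?_⟩⟩, ?_, hr3, ?_⟩
  · intro h
    refine h _ hc1 hi1 ⟨1, one_pos, ?_⟩
    rintro ⟨u, v⟩ ⟨hu, -⟩
    have hu' : u = 0 := by simpa using hu
    subst hu'
    simp [hD₁]
  · intro h
    refine h _ hc2 hi2 ⟨1, one_pos, ?_⟩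
    rintro ⟨u, v⟩ ⟨-, hu⟩
    have hu' : v = 0 := by simpa using hu
    subst hu'
    simp [hD₂]
  · intro h
    apply hncl
    rw [hr1] at h
    have := h.preimage (f := fun u : X => (u, (0 : X))) (by fun_prop)
    convert this using 1
    ext u
    simp
  · intro h
    apply hncl
    rw [hr2] at h
    have := h.preimage (f := fun u : X => ((0 : X), u)) (by fun_prop)
    convert this using 1
    ext u
    simp
  · rintro ⟨u, v⟩ ⟨hu, -⟩
    have hu' : u = 0 := by simpa using hu
    subst hu'
    exact ⟨(0, v), by simp [hD₁]⟩
  · rintro ⟨u, v⟩ ⟨-, hu⟩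
    have hu' : v = 0 := by simpa using hu
    subst hu'
    exact ⟨(u, 0), by simp [hD₂]⟩
  · rintro Z hZc hZ ⟨c, hc, h⟩
    have hA := css_comp C hss (ContinuousLinearMap.fst ℝ X X)
    have hB := css_comp C hss (ContinuousLinearMap.snd ℝ X X)
    obtain ⟨W, hWc, hW, hWZ, hWs⟩ := small_subspace _ hA Z hZc hZ (c / 2) (by positivity)
    refine hB W hWc hW ⟨c, hc, ?_⟩
    rintro ⟨u, v⟩ hw
    have h1 := h _ (hWZ hw)
    have h2 := hWs _ hw
    rw [ContinuousLinearMap.comp_apply, hD₁, hD₂, Prod.norm_mk (C u)] at h1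
    simp only [ContinuousLinearMap.comp_apply, ContinuousLinearMap.coe_fst',
      ContinuousLinearMap.coe_snd'] at h2 ⊢
    rcases le_max_iff.1 h1 with h3 | h3
    · have h4 : c * ‖(u, v)‖ ≤ 0 := by linarith
      exact h4.trans (norm_nonneg _)
    · exact h3
  · intro h
    apply hncl
    rw [hr3] at h
    have := h.preimage (f := fun u : X => (u, (0 : X))) (by fun_prop)
    convert this using 1
    ext u
    simpa using fun _ _ => h0
end

section
/- Let B : ℓ¹ → ℓ² be the Mazur-type operator B x = Σ_{k=1}^∞ x_k ζ⁽ᵏ⁾, where (ζ⁽ᵏ⁾)_{k∈ℕ} is a sequence of pairwise distinct elements dense in the unit sphere of ℓ². Fix α > 0, and suppose y = λ·ζ⁽ᵏ⁾ for some λ ∈ ℝ and k ∈ ℕ, and additionally ζ⁽ˡ⁾ ≠ −ζ⁽ᵏ⁾ for all l ∈ ℕ with l ≠ k. Then the Tikhonov functional T(x) = (1/2)·‖B x − y‖²_{ℓ²} + α·‖x‖_{ℓ¹} has exactly one minimizer x* on ℓ¹, given by the soft-thresholding formula: x* = 0 if λ ∈ [−α, α]; x* = (λ − α)·e⁽ᵏ⁾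 if λ > α; and x* = (λ + α)·e⁽ᵏ⁾ if λ < −α, where e⁽ᵏ⁾ is the k-th standard unit sequence. -/
theorem mazur_aux
    (ζ : ℕ → lp (fun _ : ℕ => ℝ) 2) (hdist : Function.Injective ζ)
    (hunit : ∀ k, ‖ζ k‖ = 1)
    (B : lp (fun _ : ℕ => ℝ) 1 →L[ℝ] lp (fun _ : ℕ => ℝ) 2)
    (hB : ∀ x : lp (fun _ : ℕ => ℝ) 1, B x = ∑' k, x k • ζ k)
    (α : ℝ) (hα : 0 < α) (l : ℝ) (k : ℕ) (y : lp (fun _ : ℕ => ℝ) 2)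
    (hy : y = l • ζ k) (hne : ∀ m : ℕ, m ≠ k → ζ m ≠ -ζ k)
    (T : lp (fun _ : ℕ => ℝ) 1 → ℝ)
    (hT : ∀ x, T x = (1 / 2 : ℝ) * ‖B x - y‖ ^ 2 + α * ‖x‖)
    (xstar : lp (fun _ : ℕ => ℝ) 1) (u c : ℝ) (hl : l = u + c) (hc : |c| ≤ α)
    (hcu : c * u = α * |u|)
    (hxstar : xstar = u • lp.single 1 k (1 : ℝ)) :
    (∀ x, T xstar ≤ T x) ∧ ∀ z : lp (fun _ : ℕ => ℝ) 1, (∀ x, T z ≤ T x) → z = xstar := by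
  have hBs : B xstar = u • ζ k := by
    rw [hB, tsum_eq_single k]
    · simp [hxstar]
    · intro j hj
      simp [hxstar, lp.single_apply, Pi.single_apply, hj]
  have hns : ‖xstar‖ = |u| := by
    rw [hxstar, norm_smul, lp.norm_single (by norm_num)]
    simp
  have hsn : ∀ x : lp (fun _ : ℕ => ℝ) 1, HasSum (fun j => |x j|) ‖x‖ := by
    intro x
    have := lp.hasSum_norm (p := 1) (by norm_num) x
    simpa using this
  have hsB : ∀ x : lp (fun _ : ℕ => ℝ) 1, HasSum (fun j => x j • ζ j) (B x) := by
    intro x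
    rw [hB]
    apply Summable.hasSum
    apply Summable.of_norm
    simpa [norm_smul, hunit] using (hsn x).summable
  have hs : ∀ x : lp (fun _ : ℕ => ℝ) 1,
      HasSum (fun j => α * |x j| - c * (x j * inner ℝ (ζ k) (ζ j)))
        (α * ‖x‖ - c * inner ℝ (ζ k) (B x)) := by
    intro x
    have h1 := (hsB x).mapL (innerSL ℝ (ζ k))
    simp only [innerSL_apply_apply, inner_smul_right] at h1
    exact ((hsn x).mul_left α).sub (h1.mul_left c)
  have hkk : inner ℝ (ζ k) (ζ k) = 1 := by
    rw [real_inner_self_eq_norm_sq, hunit]; norm_num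
  have hid : ∀ x, T x - T xstar = (1 / 2 : ℝ) * ‖B x - u • ζ k‖ ^ 2
      + (α * ‖x‖ - c * inner ℝ (ζ k) (B x)) := by
    intro x
    rw [hT, hT, hBs, hns, hy, hl]
    have e1 : B x - (u + c) • ζ k = (B x - u • ζ k) - c • ζ k := by
      rw [add_smul]; abel
    have e2 : u • ζ k - (u + c) • ζ k = - (c • ζ k) := by
      rw [add_smul]; abel
    rw [e1, e2, norm_sub_sq_real, norm_neg, inner_smul_right, inner_sub_left, inner_smul_left,
      hkk, real_inner_comm]
    simp
    linarith
  have hin : ∀ j, |(inner ℝ (ζ k) (ζ j) : ℝ)| ≤ 1 := by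
    intro j
    have := abs_real_inner_le_norm (ζ k) (ζ j)
    simpa [hunit] using this
  have hb : ∀ (x : lp (fun _ : ℕ => ℝ) 1) (j : ℕ),
      α * |x j| * (1 - |(inner ℝ (ζ k) (ζ j) : ℝ)|)
        ≤ α * |x j| - c * (x j * inner ℝ (ζ k) (ζ j)) := by
    intro x j
    have h1 : c * (x j * inner ℝ (ζ k) (ζ j)) ≤ |c| * (|x j| * |(inner ℝ (ζ k) (ζ j) : ℝ)|) := by
      rw [← abs_mul, ← abs_mul]; exact le_abs_self _
    have h2 := mul_le_mul_of_nonneg_right hc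
      (by positivity : 0 ≤ |x j| * |(inner ℝ (ζ k) (ζ j) : ℝ)|)
    nlinarith
  have hnn : ∀ (x : lp (fun _ : ℕ => ℝ) 1) (j : ℕ),
      0 ≤ α * |x j| - c * (x j * inner ℝ (ζ k) (ζ j)) := fun x j =>
    le_trans (mul_nonneg (by positivity) (by linarith [hin j])) (hb x j)
  have hlt : ∀ j, j ≠ k → |(inner ℝ (ζ k) (ζ j) : ℝ)| < 1 := by
    intro j hj
    refine lt_of_le_of_ne (hin j) fun h => ?_
    rcases eq_or_eq_neg_of_abs_eq h with h | h
    · have := (inner_eq_one_iff_of_norm_eq_one (𝕜 := ℝ) (hunit k) (hunit j)).1 h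
      exact hj (hdist this.symm)
    · have := (inner_eq_one_iff_of_norm_eq_one (𝕜 := ℝ) (hunit k)
        (by rw [norm_neg]; exact hunit j : ‖-ζ j‖ = 1)).1 (by rw [inner_neg_right, h]; norm_num)
      exact hne j hj (by rw [this, neg_neg])
  have hge : ∀ x, 0 ≤ α * ‖x‖ - c * inner ℝ (ζ k) (B x) := fun x => (hs x).nonneg (hnn x)
  refine ⟨fun x => ?_, fun z hz => ?_⟩
  · have := hid x
    have := hge x
    nlinarith [sq_nonneg ‖B x - u • ζ k‖]
  · have h1 := hid z
    have h2 := hge z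
    have h3 := hz xstar
    have h4 := sq_nonneg ‖B z - u • ζ k‖
    have h5 : ‖B z - u • ζ k‖ ^ 2 = 0 := by linarith
    have h6 : α * ‖z‖ - c * inner ℝ (ζ k) (B z) = 0 := by linarith
    have h7 : B z = u • ζ k := by
      rw [← sub_eq_zero, ← norm_eq_zero]; exact pow_eq_zero_iff (two_ne_zero) |>.1 h5
    have h8 := hs z
    rw [h6, hasSum_zero_iff_of_nonneg (hnn z)] at h8
    have h9 : ∀ j, j ≠ k → z j = 0 := by
      intro j hj
      have a := congrFun h8 j
      have b := hb z j
      simp only [Pi.zero_apply] at a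
      rw [a] at b
      by_contra hzj
      have := mul_pos (mul_pos hα (abs_pos.2 hzj)) (sub_pos.2 (hlt j hj))
      linarith
    have h10 : B z = z k • ζ k := by
      rw [hB, tsum_eq_single k]
      intro j hj
      rw [h9 j hj, zero_smul]
    have h11 : z k = u := by
      have h0 : ζ k ≠ 0 := by
        intro h; have := hunit k; rw [h, norm_zero] at this; norm_num at this
      exact smul_left_injective ℝ h0 (h10.symm.trans h7)
    ext j
    by_cases hj : j = k
    · subst hj; simp [hxstar, h11]
    · simp [hxstar, h9 j hj, lp.single_apply, Pi.single_apply, hj]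

/-- For the Mazur-type operator `B : ℓ¹ → ℓ²`, `B x = ∑' k, x k • ζ k`, fix
`α > 0` and `y = λ • ζ k` with `ζ l ≠ −ζ k` for all `l ≠ k`. Then the Tikhonov functional
`T(x) = ½‖Bx − y‖² + α‖x‖₁` has exactly one minimizer, the soft-thresholding element:
`0` if `λ ∈ [−α, α]`, `(λ−α) • e⁽ᵏ⁾` if `λ > α`, and `(λ+α) • e⁽ᵏ⁾` if `λ < −α`. -/
theorem tikhonov_unique_soft_thresholding_minimizer
    (ζ : ℕ → lp (fun _ : ℕ => ℝ) 2) (hdist : Function.Injective ζ)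
    (hunit : ∀ k, ‖ζ k‖ = 1)
    (hdense : Metric.sphere (0 : lp (fun _ : ℕ => ℝ) 2) 1 ⊆ closure (Set.range ζ))
    (B : lp (fun _ : ℕ => ℝ) 1 →L[ℝ] lp (fun _ : ℕ => ℝ) 2)
    (hB : ∀ x : lp (fun _ : ℕ => ℝ) 1, B x = ∑' k, x k • ζ k)
    (α : ℝ) (hα : 0 < α) (l : ℝ) (k : ℕ) (y : lp (fun _ : ℕ => ℝ) 2)
    (hy : y = l • ζ k) (hne : ∀ m : ℕ, m ≠ k → ζ m ≠ -ζ k)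
    (T : lp (fun _ : ℕ => ℝ) 1 → ℝ)
    (hT : ∀ x, T x = (1 / 2 : ℝ) * ‖B x - y‖ ^ 2 + α * ‖x‖)
    (xstar : lp (fun _ : ℕ => ℝ) 1)
    (hxstar : xstar = if α < l then (l - α) • lp.single 1 k (1 : ℝ)
      else if l < -α then (l + α) • lp.single 1 k (1 : ℝ) else 0) :
    (∀ x, T xstar ≤ T x) ∧ ∀ z : lp (fun _ : ℕ => ℝ) 1, (∀ x, T z ≤ T x) → z = xstar := by
  by_cases h1 : α < l
  · rw [if_pos h1] at hxstar
    exact mazur_aux ζ hdist hunit B hB α hα l k y hy hne T hT xstar (l - α) α (by ring)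
      (abs_of_pos hα).le (by rw [abs_of_pos (sub_pos.2 h1)]) hxstar
  · rw [if_neg h1] at hxstar
    by_cases h2 : l < -α
    · rw [if_pos h2] at hxstar
      exact mazur_aux ζ hdist hunit B hB α hα l k y hy hne T hT xstar (l + α) (-α) (by ring)
        (by rw [abs_neg]; exact (abs_of_pos hα).le)
        (by rw [abs_of_neg (by linarith : l + α < 0)]; ring) hxstar
    · rw [if_neg h2] at hxstar
      exact mazur_aux ζ hdist hunit B hB α hα l k y hy hne T hT xstar 0 l (by ring)
        (abs_le.2 ⟨not_lt.1 h2, not_lt.1 h1⟩) (by simp) (by rw [hxstar, zero_smul])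
end

section
/- Let B : ℓ¹ → ℓ² be the Mazur-type operator B x = Σ_{k=1}^∞ x_k ζ⁽ᵏ⁾, where (ζ⁽ᵏ⁾)_{k∈ℕ} is a sequence of pairwise distinct elements dense in the unit sphere of ℓ². Fix α > 0 and suppose y = λ·ζ⁽ᵏ⁾ with |λ| > α, and suppose there exists l ∈ ℕ with ζ⁽ˡ⁾ = −ζ⁽ᵏ⁾. Then besides the soft-thresholded minimizer, for each γ ∈ (α − λ, 0) in the case λ > α, the element (γ + λ − α)·e⁽ᵏ⁾ + γ·e⁽ˡ⁾ is a minimizer of the Tikhonov functional T(x) = (1/2)·‖B x − y‖²_{ℓ²} + α·‖x‖_{ℓ¹}, and for each γ ∈ (0, −α − λ) in the case λ < −α, the element (γ + λ + α)·e⁽ᵏ⁾ + γ·e⁽ˡ⁾ is a minimizer of T. -/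
/-- For the Mazur-type operator `B : ℓ¹ → ℓ²`, `B x = ∑' k, x k • ζ k`, fix
`α > 0` and `y = λ • ζ k` with `|λ| > α`, and suppose `ζ l = −ζ k` for some `l`. Then besides
the soft-thresholded minimizer there is a family of further minimizers of the Tikhonov
functional `T(x) = ½‖Bx − y‖² + α‖x‖₁`: for `λ > α` and each `γ ∈ (α − λ, 0)` the element
`(γ + λ − α) • e⁽ᵏ⁾ + γ • e⁽ˡ⁾`, and for `λ < −α` and each `γ ∈ (0, −α − λ)` the element
`(γ + λ + α) • e⁽ᵏ⁾ + γ • e⁽ˡ⁾`. -/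
theorem tikhonov_additional_minimizers_antipodal_case
    (ζ : ℕ → lp (fun _ : ℕ => ℝ) 2) (hdist : Function.Injective ζ)
    (hunit : ∀ m, ‖ζ m‖ = 1)
    (hdense : Metric.sphere (0 : lp (fun _ : ℕ => ℝ) 2) 1 ⊆ closure (Set.range ζ))
    (B : lp (fun _ : ℕ => ℝ) 1 →L[ℝ] lp (fun _ : ℕ => ℝ) 2)
    (hB : ∀ x : lp (fun _ : ℕ => ℝ) 1, B x = ∑' m, x m • ζ m)
    (α : ℝ) (hα : 0 < α) (l : ℝ) (k : ℕ) (y : lp (fun _ : ℕ => ℝ) 2)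
    (hy : y = l • ζ k) (hl : α < |l|)
    (j : ℕ) (hj : ζ j = -ζ k)
    (T : lp (fun _ : ℕ => ℝ) 1 → ℝ)
    (hT : ∀ x, T x = (1 / 2 : ℝ) * ‖B x - y‖ ^ 2 + α * ‖x‖) :
    (α < l → ∀ γ : ℝ, γ ∈ Set.Ioo (α - l) 0 →
      ∀ x, T ((γ + l - α) • lp.single 1 k (1 : ℝ) + γ • lp.single 1 j (1 : ℝ)) ≤ T x) ∧
    (l < -α → ∀ γ : ℝ, γ ∈ Set.Ioo 0 (-α - l) →
      ∀ x, T ((γ + l + α) • lp.single 1 k (1 : ℝ) + γ • lp.single 1 j (1 : ℝ)) ≤ T x) := by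
  have hnorm : ∀ x : lp (fun _ : ℕ => ℝ) 1, HasSum (fun m => ‖x m‖) ‖x‖ := by
    intro x
    have h := lp.hasSum_norm (p := 1) (by norm_num) x
    simpa using h
  have hBle : ∀ x, ‖B x‖ ≤ ‖x‖ := by
    intro x
    rw [hB]
    refine tsum_of_norm_bounded (hnorm x) ?_
    intro m
    rw [norm_smul, hunit, mul_one]
  have hBs : ∀ m, B (lp.single 1 m (1 : ℝ)) = ζ m := by
    intro m
    rw [hB, tsum_eq_single m]
    · simp
    · intro n hn
      simp [lp.single_apply, hn]
  have hns : ∀ m, ‖(lp.single 1 m (1 : ℝ) : lp (fun _ : ℕ => ℝ) 1)‖ = 1 := by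
    intro m
    rw [lp.norm_single (by norm_num)]
    simp
  have hlow : ∀ x, α * |l| - α ^ 2 / 2 ≤ T x := by
    intro x
    rw [hT]
    have h1 : ‖y‖ = |l| := by rw [hy, norm_smul, hunit, mul_one, Real.norm_eq_abs]
    have h2 : ‖y‖ ≤ ‖B x‖ + ‖B x - y‖ := norm_le_insert (B x) y
    have h3 : |l| - ‖B x - y‖ ≤ ‖x‖ := by linarith [hBle x]
    have h4 := mul_le_mul_of_nonneg_left h3 hα.le
    nlinarith [sq_nonneg (‖B x - y‖ - α)]
  have hup : ∀ a b : ℝ, T (a • lp.single 1 k (1 : ℝ) + b • lp.single 1 j (1 : ℝ)) ≤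
      1 / 2 * (a - b - l) ^ 2 + α * (|a| + |b|) := by
    intro a b
    rw [hT]
    have h1 : B (a • lp.single 1 k (1 : ℝ) + b • lp.single 1 j (1 : ℝ)) - y
        = (a - b - l) • ζ k := by
      rw [map_add, map_smul, map_smul, hBs, hBs, hj, hy]
      module
    rw [h1, norm_smul, hunit, mul_one, Real.norm_eq_abs, sq_abs]
    have h2 := norm_add_le (a • (lp.single 1 k (1 : ℝ) : lp (fun _ : ℕ => ℝ) 1))
      (b • lp.single 1 j (1 : ℝ))
    rw [norm_smul, norm_smul, hns, hns, mul_one, mul_one, Real.norm_eq_abs,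
      Real.norm_eq_abs] at h2
    have h3 := mul_le_mul_of_nonneg_left h2 hα.le
    linarith
  constructor
  · rintro h γ ⟨h1, h2⟩ x
    refine (hup _ _).trans (le_trans (le_of_eq ?_) (hlow x))
    rw [abs_of_pos (by linarith : 0 < γ + l - α), abs_of_neg h2,
      abs_of_pos (by linarith : 0 < l)]
    ring
  · rintro h γ ⟨h1, h2⟩ x
    refine (hup _ _).trans (le_trans (le_of_eq ?_) (hlow x))
    rw [abs_of_neg (by linarith : γ + l + α < 0), abs_of_pos h1,
      abs_of_neg (by linarith : l < 0)]
    ring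
end

section
/- Let Y be a separable real Banach space, let A_Maz : ℓ¹ → Y be a Mazur-type operator A_Maz x = Σ_{k=1}^∞ x_k ζ⁽ᵏ⁾ with (ζ⁽ᵏ⁾)_{k∈ℕ} pairwise distinct and dense in the unit sphere of Y, and let C : Y → Z be a nonzero bounded linear operator into a real Banach space Z. Then the composition A = C ∘ A_Maz : ℓ¹ → Z is not weak*-to-weak sequentially continuous. More precisely, the standard unit sequences e⁽ⁿ⁾ converge weak* to 0 in ℓ¹, but there exists a continuous linear functional η on Z such that η(A e⁽ⁿ⁾) = η(C ζ⁽ⁿ⁾) does not converge to 0 as n → ∞; hence (A e⁽ⁿ⁾) does not converge weakly to 0 = A 0 in Z. -/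
open Filter

/-- A sequence in `ℓ¹` converges weak* (w.r.t. the predual `c₀`) to `x₀` if all dual pairings
with null sequences converge. -/
def WeakStarConvLp1 (x : ℕ → lp (fun _ : ℕ => ℝ) 1) (x₀ : lp (fun _ : ℕ => ℝ) 1) : Prop :=
  ∀ c : ℕ → ℝ, Tendsto c atTop (nhds 0) →
    Tendsto (fun n => ∑' k, c k * x n k) atTop (nhds (∑' k, c k * x₀ k))

/-- A bounded linear operator `A : ℓ¹ → Z` is weak*-to-weak sequentially continuous if it maps
weak*-convergent sequences to weakly convergent sequences. -/
def WeakStarToWeakSeqContinuous {Z : Type*} [NormedAddCommGroup Z] [NormedSpace ℝ Z]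
    (A : lp (fun _ : ℕ => ℝ) 1 →L[ℝ] Z) : Prop :=
  ∀ (x : ℕ → lp (fun _ : ℕ => ℝ) 1) (x₀ : lp (fun _ : ℕ => ℝ) 1), WeakStarConvLp1 x x₀ →
    ∀ f : Z →L[ℝ] ℝ, Tendsto (fun n => f (A (x n))) atTop (nhds (f (A x₀)))

theorem aux_mazur {Y : Type*} [NormedAddCommGroup Y] [NormedSpace ℝ Y]
    (ζ : ℕ → Y) (hdist : Function.Injective ζ) (hunit : ∀ k, ‖ζ k‖ = 1)
    (hdense : Metric.sphere (0 : Y) 1 ⊆ closure (Set.range ζ))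
    (g : Y →L[ℝ] ℝ) (u : Y) (hu : ‖u‖ = 1) (hg : g u ≠ 0) :
    ¬ Tendsto (fun n => g (ζ n)) atTop (nhds 0) := by
  intro hT
  have ha : 0 < |g u| / 2 := by positivity
  set a := |g u| / 2 with ha'
  have hF : {n | a ≤ |g (ζ n)|}.Finite := by
    have := (Metric.tendsto_atTop.1 hT) a ha
    obtain ⟨N, hN⟩ := this
    refine (Set.finite_lt_nat N).subset fun n hn => ?_
    by_contra hlt
    have := hN n (not_lt.1 hlt)
    rw [Real.dist_eq, sub_zero] at this
    exact absurd hn (not_le.2 this)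
  have hsub : ∀ y : Y, ‖y‖ = 1 → a < |g y| → y ∈ ζ '' {n | a ≤ |g (ζ n)|} := by
    intro y hy hgy
    have hcl : IsClosed (ζ '' {n | a ≤ |g (ζ n)|}) := (hF.image ζ).isClosed
    rw [← hcl.closure_eq]
    have hy' := hdense (by simpa using hy : y ∈ Metric.sphere (0 : Y) 1)
    rw [mem_closure_iff] at hy' ⊢
    intro o ho hyo
    have hU : IsOpen {z : Y | a < |g z|} := isOpen_lt continuous_const (by fun_prop)
    obtain ⟨z, ⟨hz1, hz2⟩, n, rfl⟩ := hy' (o ∩ {z : Y | a < |g z|}) (ho.inter hU) ⟨hyo, hgy⟩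
    have hz3 : a < |g (ζ n)| := hz2
    have hz4 : a ≤ |g (ζ n)| := hz3.le
    exact ⟨ζ n, hz1, n, hz4, rfl⟩
  obtain ⟨v, hv1, hvu, hvu'⟩ : ∃ v : Y, ‖v‖ = 1 ∧ v ≠ u ∧ v ≠ -u := by
    have hinf : (Set.range ζ).Infinite := Set.infinite_range_of_injective hdist
    obtain ⟨v, ⟨k, rfl⟩, hv⟩ := hinf.exists_notMem_finite (Set.toFinite {u, -u})
    simp only [Set.mem_insert_iff, Set.mem_singleton_iff, not_or] at hv
    exact ⟨ζ k, hunit k, hv.1, hv.2⟩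
  have hli : ∀ s t : ℝ, s • u + t • v = 0 → s = 0 ∧ t = 0 := by
    intro s t h
    have h1 : s • u = -(t • v) := eq_neg_of_add_eq_zero_left h
    have h2 : |s| = |t| := by
      have := congrArg norm h1
      simpa [norm_smul, hu, hv1] using this
    by_cases ht : t = 0
    · subst ht; simpa using h2
    exfalso
    rcases abs_eq_abs.1 h2 with rfl | rfl
    · rw [← smul_neg] at h1
      have := smul_right_injective Y ht h1
      exact hvu' (by rw [this]; simp)
    · rw [neg_smul, neg_inj] at h1
      exact hvu (smul_right_injective Y ht h1).symm
  have hw : ∀ t : ℝ, u + t • v ≠ 0 := by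
    intro t h
    have := hli 1 t (by simpa using h)
    exact one_ne_zero this.1
  have hwn : ∀ t : ℝ, 0 < ‖u + t • v‖ := fun t => norm_pos_iff.2 (hw t)
  have hS : {t : ℝ | a * ‖u + t • v‖ < |g (u + t • v)|} ∈ nhds (0 : ℝ) := by
    refine IsOpen.mem_nhds (isOpen_lt (by fun_prop) (by fun_prop)) ?_
    simp only [Set.mem_ofPred_eq, zero_smul, add_zero, hu, mul_one]
    linarith
  have hSinf := infinite_of_mem_nhds (0 : ℝ) hS
  refine (Set.infinite_of_injOn_mapsTo (f := fun t : ℝ => ‖u + t • v‖⁻¹ • (u + t • v))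
    ?_ ?_ hSinf) (hF.image ζ)
  · intro s _ t _ hst
    simp only at hst
    have hs := inv_pos.2 (hwn s)
    set p := ‖u + s • v‖⁻¹
    set q := ‖u + t • v‖⁻¹
    have := hli (p - q) (p * s - q * t) (by
      have h0 := sub_eq_zero.2 hst
      rw [← h0]; module)
    have hpq : p = q := by linarith [this.1]
    have h2 := this.2
    rw [← hpq] at h2
    have : p * s = p * t := by linarith
    exact mul_left_cancel₀ hs.ne' this
  · intro t ht
    apply hsub
    · rw [norm_smul, norm_inv, norm_norm, inv_mul_cancel₀ (hwn t).ne']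
    · rw [map_smul, smul_eq_mul, abs_mul, abs_of_pos (inv_pos.2 (hwn t)), inv_mul_eq_div,
        lt_div_iff₀ (hwn t)]
      exact ht

/-- Compositions `C ∘ A_Maz` of a Mazur-type operator `A_Maz : ℓ¹ → Y` with a
nonzero bounded linear operator `C : Y → Z` are never weak*-to-weak sequentially continuous:
the unit sequences `e⁽ⁿ⁾` converge weak* to `0` in `ℓ¹`, but some functional `η` on `Z`
satisfies that `η (C (A_Maz e⁽ⁿ⁾))` does not tend to `0`. -/
theorem composition_with_mazur_not_weakStarToWeak
    {Y Z : Type*} [NormedAddCommGroup Y] [NormedSpace ℝ Y] [CompleteSpace Y]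
    [TopologicalSpace.SeparableSpace Y]
    [NormedAddCommGroup Z] [NormedSpace ℝ Z] [CompleteSpace Z]
    (ζ : ℕ → Y) (hdist : Function.Injective ζ) (hunit : ∀ k, ‖ζ k‖ = 1)
    (hdense : Metric.sphere (0 : Y) 1 ⊆ closure (Set.range ζ))
    (AMaz : lp (fun _ : ℕ => ℝ) 1 →L[ℝ] Y)
    (hAMaz : ∀ x : lp (fun _ : ℕ => ℝ) 1, AMaz x = ∑' k, x k • ζ k)
    (C : Y →L[ℝ] Z) (hC : C ≠ 0) :
    ¬ WeakStarToWeakSeqContinuous (C.comp AMaz) ∧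
    WeakStarConvLp1 (fun n => lp.single 1 n (1 : ℝ)) 0 ∧
    ∃ η : Z →L[ℝ] ℝ,
      ¬ Tendsto (fun n => η ((C.comp AMaz) (lp.single 1 n (1 : ℝ)))) atTop (nhds 0) := by
  have hws : WeakStarConvLp1 (fun n => lp.single 1 n (1 : ℝ)) 0 := by
    intro c hc
    have h1 : ∀ n, ∑' k, c k * (lp.single 1 n (1 : ℝ) : lp (fun _ : ℕ => ℝ) 1) k = c n := by
      intro n
      rw [tsum_eq_single n]
      · simp
      · intro k hk
        simp [lp.single_apply, hk]
    simp only [h1]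
    simpa using hc
  have hη : ∃ η : Z →L[ℝ] ℝ,
      ¬ Tendsto (fun n => η ((C.comp AMaz) (lp.single 1 n (1 : ℝ)))) atTop (nhds 0) := by
    have hA : ∀ n, AMaz (lp.single 1 n (1 : ℝ)) = ζ n := by
      intro n
      rw [hAMaz, tsum_eq_single n]
      · simp
      · intro k hk
        simp [lp.single_apply, hk]
    obtain ⟨y, hy⟩ : ∃ y, C y ≠ 0 := by
      by_contra! h
      exact hC (ContinuousLinearMap.ext h)
    have hy0 : y ≠ 0 := by
      rintro rfl
      simp at hy
    obtain ⟨η, -, hη⟩ := exists_dual_vector ℝ (C y) (norm_ne_zero_iff.2 hy)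
    refine ⟨η, ?_⟩
    have := aux_mazur ζ hdist hunit hdense (η.comp C) (‖y‖⁻¹ • y) (norm_smul_inv_norm (𝕜 := ℝ) hy0)
      (by
        have : η (C y) ≠ 0 := by
          rw [hη]; simpa using hy
        simp [this, hy0])
    simpa [hA] using this
  refine ⟨fun h => ?_, hws, hη⟩
  obtain ⟨η, hη⟩ := hη
  apply hη
  simpa using h _ _ hws η
end
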